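/- Let n ≥ 2 be an integer and let φ ∈ ℤ[x] be a monic polynomial whose reduction modulo p is irreducible in 𝔽_p[x] for every prime p ≤ n. Let a_0(x), a_1(x), …, a_{n−1}(x) ∈ ℤ[x] be polynomials each of degree strictly less than deg φ, and let a_n be an integer. Assume that a_n is coprime to n! and that the content of a_0(x) is coprime to n!. Then for every integer k with 1 ≤ k ≤ n/2, the polynomial F(x) = Σ_{i=0}^{n−1} (n!/i!)·a_i(x)·φ(x)^i + a_n·φ(x)^n has no factor in ℤ[x] whose degree lies in the interval [k·deg φ, (k+1)·deg φ). -/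

import Mathlib

open Polynomial

/-!
By the theorem of Sylvester and Schur, proved here following Erdős, some prime `p > k` divides
`n.choose k`. Then `p` divides `n! / i!` for all `i ≤ n - k`, so `φ ^ (n - k + 1)` divides `F`
modulo `p`, and a factor `g` with `k deg φ ≤ deg g` is too large to be coprime to `φ` modulo `p`.

Give `p` weight `k` and `φ` weight `1`. Since `k * v_p(i!) < i` for `i > 0`, the form of lowest
weight of `F` is `n! a₀`, a unit multiple of `p ^ v` modulo `(p, φ)`. In the chart `p = π ^ k`,
`φ = π y` of the weighted blow-up, if `g ≡ r φ ^ j` modulo `p` with `0 < j ≤ k`, then `g / π ^ j`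
reduces modulo `π` to a polynomial in `y` with `y ^ j`-coefficient `r`, which divides the nonzero
constant `F / π ^ (k v)`. Hence `φ` divides `r` modulo `p`. Induction on `j` yields
`φ ^ (k + 1) ∣ g` modulo `p`, and therefore `(k + 1) deg φ ≤ deg g`.
-/

/-! ### Large prime factors of binomial coefficients -/

section SylvesterSchur

open Nat

theorem pow_mul_descFactorial_le {m n : ℕ} (h : m ≤ n) (j : ℕ) :
    n ^ j * m.descFactorial j ≤ m ^ j * n.descFactorial j := by
  induction j with
  | zero => simp
  | succ j ih =>
    have factor_le : n * (m - j) ≤ m * (n - j) := by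
      rw [Nat.mul_sub, Nat.mul_sub, mul_comm n m]
      exact Nat.sub_le_sub_left (Nat.mul_le_mul_right j h) _
    calc n ^ (j + 1) * m.descFactorial (j + 1)
        = (n * (m - j)) * (n ^ j * m.descFactorial j) := by rw [descFactorial_succ]; ring
      _ ≤ (m * (n - j)) * (m ^ j * n.descFactorial j) := Nat.mul_le_mul factor_le ih
      _ = m ^ (j + 1) * n.descFactorial (j + 1) := by rw [descFactorial_succ]; ring

theorem pow_mul_choose_le {m n : ℕ} (h : m ≤ n) (k : ℕ) :
    n ^ k * m.choose k ≤ m ^ k * n.choose k := by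
  refine Nat.le_of_mul_le_mul_left ?_ k.factorial_pos
  have := pow_mul_descFactorial_le h k
  simp only [descFactorial_eq_factorial_mul_choose] at this
  linarith

theorem two_mul_pow_le_choose {n k : ℕ} (hk : 0 < k) (h : 2 * k ≤ n) :
    (2 * n) ^ k ≤ 2 * k * k ^ k * n.choose k := by
  refine Nat.le_of_mul_le_mul_left ?_ (pow_pos two_pos k)
  calc 2 ^ k * (2 * n) ^ k = n ^ k * 4 ^ k := by rw [← mul_pow, ← mul_pow]; congr 1; ring
    _ ≤ n ^ k * (2 * k * (2 * k).choose k) :=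
        Nat.mul_le_mul_left _ (four_pow_le_two_mul_self_mul_centralBinom k hk)
    _ = 2 * k * (n ^ k * (2 * k).choose k) := by ring
    _ ≤ 2 * k * ((2 * k) ^ k * n.choose k) := Nat.mul_le_mul_left _ (pow_mul_choose_le h k)
    _ = 2 ^ k * (2 * k * k ^ k * n.choose k) := by rw [mul_pow]; ring

theorem prod_primesLE_pow_factorization {m M : ℕ} (h : m ∈ smoothNumbers (M + 1)) :
    ∏ p ∈ M.primesLE, p ^ m.factorization p = m := by
  conv_rhs => rw [← prod_factorization_pow_eq_self (ne_zero_of_mem_smoothNumbers h)]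
  exact (Finsupp.prod_of_support_subset _ (primeFactors_subset_of_mem_smoothNumbers h) _
    fun _ _ => pow_zero _).symm

theorem choose_le_pow_primeCounting {n k M : ℕ} (hn : 0 < n)
    (h : n.choose k ∈ smoothNumbers (M + 1)) : n.choose k ≤ n ^ primeCounting M := by
  conv_lhs => rw [← prod_primesLE_pow_factorization h]
  rw [← primesLE_card_eq_primeCounting]
  exact Finset.prod_le_pow_card _ _ _ fun p _ => pow_factorization_choose_le hn

theorem choose_le_pow_primeCounting_sqrt_mul {n k M : ℕ} (hn : 0 < n)
    (h : n.choose k ∈ smoothNumbers (M + 1)) :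
    n.choose k ≤ n ^ primeCounting n.sqrt * 4 ^ M := by
  conv_lhs => rw [← prod_primesLE_pow_factorization h,
    ← Finset.prod_filter_mul_prod_filter_not _ (· ≤ n.sqrt)]
  refine Nat.mul_le_mul ?_ ?_
  · have card_le : (M.primesLE.filter (· ≤ n.sqrt)).card ≤ primeCounting n.sqrt := by
      rw [← primesLE_card_eq_primeCounting]
      refine Finset.card_le_card fun p hp => ?_
      simp only [Finset.mem_filter, mem_primesLE] at hp ⊢
      exact ⟨hp.2, hp.1.2⟩
    exact (Finset.prod_le_pow_card _ _ _ fun p _ => pow_factorization_choose_le hn).trans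
      (Nat.pow_le_pow_right hn card_le)
  · refine le_trans ?_ (primorial_le_four_pow M)
    rw [primorial_eq_prod_primesLE]
    refine (Finset.prod_le_prod' (g := id) fun p hp => ?_).trans
      (Finset.prod_le_prod_of_subset_of_one_le' (Finset.filter_subset _ _)
        fun p hp _ => (prime_of_mem_primesLE hp).one_le)
    have hp' := (Finset.mem_filter.1 hp)
    have exponent_le_one : (n.choose k).factorization p ≤ 1 :=
      factorization_choose_le_one (sqrt_lt'.1 (not_le.1 hp'.2))
    simpa using Nat.pow_le_pow_right (prime_of_mem_primesLE hp'.1).pos exponent_le_one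

theorem three_mul_primeCounting_le {k : ℕ} (hk : 37 ≤ k) : 3 * primeCounting k ≤ k := by
  rcases lt_or_ge k 54 with hlt | hge
  · interval_cases k <;> decide +kernel
  · obtain ⟨m, rfl⟩ := Nat.exists_eq_add_of_le hge
    have wheel := primeCounting_add_le (a := 6) (k := 54) (by norm_num) (by norm_num) m
    have : primeCounting 54 = 16 := by decide +kernel
    have : totient 6 = 2 := by decide
    lia

theorem eight_mul_cube_lt_two_pow {k : ℕ} (hk : 15 ≤ k) : 8 * k ^ 3 < 2 ^ k := by
  induction k, hk using Nat.le_induction with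
  | base => norm_num
  | succ k hk ih =>
    have : (k + 1) ^ 3 ≤ 2 * k ^ 3 := by nlinarith [Nat.mul_le_mul hk hk]
    rw [pow_succ 2 k]
    lia

theorem two_mul_pow_le_of_choose_mem_smoothNumbers {n k : ℕ} (hk : 0 < k) (hkn : 2 * k ≤ n)
    (h : n.choose k ∈ smoothNumbers (k + 1)) :
    (2 * n) ^ k ≤ 2 * k * k ^ k * n ^ primeCounting k :=
  (two_mul_pow_le_choose hk hkn).trans
    (Nat.mul_le_mul_left _ (choose_le_pow_primeCounting (by lia) h))

theorem four_mul_sq_lt_cube_of_choose_mem_smoothNumbers {n k : ℕ} (hk : 37 ≤ k) (hkn : 2 * k ≤ n)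
    (h : n.choose k ∈ smoothNumbers (k + 1)) : 4 * n ^ 2 < k ^ 3 := by
  have hn : 0 < n := by lia
  have hk0 : 0 < k := by lia
  have cubed : (8 * n ^ 2) ^ k * n ^ k ≤ 8 * k ^ 3 * (k ^ 3) ^ k * n ^ k := by
    calc (8 * n ^ 2) ^ k * n ^ k = ((2 * n) ^ k) ^ 3 := by
          rw [← mul_pow, ← pow_mul, mul_comm k 3, pow_mul]; congr 1; ring
      _ ≤ (2 * k * k ^ k * n ^ primeCounting k) ^ 3 :=
          Nat.pow_le_pow_left (two_mul_pow_le_of_choose_mem_smoothNumbers hk0 hkn h) 3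
      _ = 8 * k ^ 3 * (k ^ 3) ^ k * n ^ (3 * primeCounting k) := by ring
      _ ≤ 8 * k ^ 3 * (k ^ 3) ^ k * n ^ k :=
          Nat.mul_le_mul_left _ (Nat.pow_le_pow_right hn (three_mul_primeCounting_le hk))
  by_contra! hle
  have : 2 ^ k * (k ^ 3) ^ k ≤ 8 * k ^ 3 * (k ^ 3) ^ k :=
    calc 2 ^ k * (k ^ 3) ^ k = (2 * k ^ 3) ^ k := (mul_pow ..).symm
      _ ≤ (8 * n ^ 2) ^ k := Nat.pow_le_pow_left (by lia) k
      _ ≤ 8 * k ^ 3 * (k ^ 3) ^ k := Nat.le_of_mul_le_mul_right cubed (by positivity)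
  exact (Nat.le_of_mul_le_mul_right this (by positivity)).not_gt
    (eight_mul_cube_lt_two_pow (by lia))

theorem mul_log_le_of_choose_mem_smoothNumbers {n k M : ℕ} (hn : 37 ^ 2 ≤ n) (hk : 0 < k)
    (hkn : 2 * k ≤ n) (h : n.choose k ∈ smoothNumbers (M + 1)) :
    k * Real.log (2 * n / k) ≤ (√n / 3 + 1) * Real.log n + M * Real.log 4 := by
  have : (0 : ℝ) < n := by exact_mod_cast (by lia : 0 < n)
  have : (0 : ℝ) < k := by exact_mod_cast hk
  have pow_le : (2 * n / k : ℝ) ^ k ≤ n ^ (primeCounting n.sqrt + 1) * 4 ^ M := by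
    rw [div_pow, div_le_iff₀ (by positivity)]
    have : (2 * n) ^ k ≤ n ^ (primeCounting n.sqrt + 1) * 4 ^ M * k ^ k :=
      calc (2 * n) ^ k ≤ 2 * k * k ^ k * n.choose k := two_mul_pow_le_choose hk hkn
        _ ≤ n * k ^ k * (n ^ primeCounting n.sqrt * 4 ^ M) := by
            gcongr
            exact choose_le_pow_primeCounting_sqrt_mul (by lia) h
        _ = n ^ (primeCounting n.sqrt + 1) * 4 ^ M * k ^ k := by ring
    exact_mod_cast this
  have primeCounting_le : (primeCounting n.sqrt : ℝ) ≤ √n / 3 := by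
    have : 3 * (primeCounting n.sqrt : ℝ) ≤ n.sqrt := by
      exact_mod_cast three_mul_primeCounting_le (le_sqrt'.2 hn)
    linarith [Real.nat_sqrt_le_real_sqrt (a := n)]
  calc k * Real.log (2 * n / k) = Real.log ((2 * n / k) ^ k) := (Real.log_pow ..).symm
    _ ≤ Real.log (n ^ (primeCounting n.sqrt + 1) * 4 ^ M) :=
        Real.log_le_log (by positivity) pow_le
    _ = (primeCounting n.sqrt + 1) * Real.log n + M * Real.log 4 := by
        rw [Real.log_mul (by positivity) (by positivity), Real.log_pow, Real.log_pow]
        push_cast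
        rfl
    _ ≤ (√n / 3 + 1) * Real.log n + M * Real.log 4 := by
        gcongr

theorem sqrt_div_three_add_one_mul_log_lt {x : ℝ} (hx : 37 ^ 2 ≤ x) :
    (√x / 3 + 1) * Real.log x < 0.08 * x := by
  have hx0 : 0 ≤ x := by linarith
  have sqrt_ge : 37 ≤ √x := Real.le_sqrt_of_sq_le hx
  have log_thirty_seven_lt : Real.log 37 < 3.75 := by
    have : 5 * Real.log 37 ≤ 27 * Real.log 2 :=
      calc 5 * Real.log 37 = Real.log (37 ^ 5) := by rw [Real.log_pow]; norm_num
        _ ≤ Real.log (2 ^ 27) := Real.log_le_log (by norm_num) (by norm_num)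
        _ = 27 * Real.log 2 := by rw [Real.log_pow]; norm_num
    linarith [Real.log_two_lt_d9]
  have log_le : Real.log x ≤ 0.203 * √x := by
    have exp_two_le : Real.exp 2 ≤ 37 ^ 2 := by
      have : Real.exp 2 = Real.exp 1 ^ 2 := by rw [← Real.exp_nat_mul]; norm_num
      rw [this]
      exact pow_le_pow_left₀ (by positivity) (by linarith [Real.exp_one_lt_d9]) 2
    have anti := Real.log_div_sqrt_antitoneOn exp_two_le (exp_two_le.trans hx) hx
    simp only [Real.sqrt_sq (show (0 : ℝ) ≤ 37 by norm_num), Real.log_pow] at anti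
    rw [div_le_iff₀ (by linarith)] at anti
    push_cast at anti
    nlinarith
  nlinarith [Real.sq_sqrt hx0]

theorem sqrt_div_three_add_one_mul_log_lt_of_sq_lt_cube {x y : ℝ} (hx : 3 ^ 6 ≤ x)
    (h : 4 * x ^ 2 < y ^ 3) : (√x / 3 + 1) * Real.log x < 0.8 * y := by
  obtain ⟨t, ht, rfl⟩ : ∃ t : ℝ, 3 ≤ t ∧ t ^ 6 = x := by
    refine ⟨x ^ (6⁻¹ : ℝ), ?_, Real.rpow_inv_natCast_pow (by linarith) (by norm_num)⟩
    rw [Real.le_rpow_inv_iff_of_pos (by norm_num) (by linarith) (by norm_num)]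
    exact_mod_cast hx
  have sqrt_eq : √(t ^ 6) = t ^ 3 := by
    rw [show t ^ 6 = (t ^ 3) ^ 2 by ring, Real.sqrt_sq (by positivity)]
  have log_le : Real.log (t ^ 6) ≤ 3 * t := by
    have log_half_le := Real.log_le_sub_one_of_pos (show 0 < t / 2 by positivity)
    rw [Real.log_div (by positivity) (by norm_num)] at log_half_le
    rw [Real.log_pow]
    push_cast
    linarith [Real.log_two_lt_d9]
  have lt_y : 1.5 * t ^ 4 < y := by
    refine (Odd.strictMono_pow (by decide : Odd 3)).lt_iff_lt.1 (lt_of_le_of_lt ?_ h)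
    calc (1.5 * t ^ 4) ^ 3 = 3.375 * (t ^ 6) ^ 2 := by ring
      _ ≤ 4 * (t ^ 6) ^ 2 := by gcongr; norm_num
  calc (√(t ^ 6) / 3 + 1) * Real.log (t ^ 6) ≤ (t ^ 3 / 3 + 1) * (3 * t) := by
        rw [sqrt_eq]
        gcongr
    _ ≤ 1.2 * t ^ 4 := by nlinarith [pow_le_pow_left₀ (by norm_num) ht 3]
    _ < 0.8 * y := by linarith

theorem choose_mem_smoothNumbers_div_three {n k : ℕ} (hn : 6 ≤ n) (hkn : 2 * k ≤ n)
    (h : n.choose k ∈ smoothNumbers (k + 1)) : n.choose k ∈ smoothNumbers (n / 3 + 1) := by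
  rw [mem_smoothNumbers'] at h ⊢
  intro p hp hpdvd
  by_contra! hlt
  have hpk : p < k + 1 := h p hp hpdvd
  have : (n.choose k).factorization p = 0 :=
    factorization_choose_of_lt_three_mul (by lia) (by lia) (by lia) (by lia)
  exact (hp.factorization_pos_of_dvd (choose_pos (by lia)).ne' hpdvd).ne' this

theorem five_mul_lt_two_mul_of_choose_mem_smoothNumbers {n k : ℕ} (hn : 37 ^ 2 ≤ n) (hk : 0 < k)
    (hkn : 2 * k ≤ n) (h : n.choose k ∈ smoothNumbers (k + 1)) : 5 * k < 2 * n := by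
  by_contra! hle
  have hk' : (0 : ℝ) < k := by exact_mod_cast hk
  have hkn' : 2 * (k : ℝ) ≤ n := by exact_mod_cast hkn
  have hle' : 2 * (n : ℝ) ≤ 5 * k := by exact_mod_cast hle
  have bound := mul_log_le_of_choose_mem_smoothNumbers hn hk hkn
    (choose_mem_smoothNumbers_div_three (by lia) hkn h)
  have error_lt := sqrt_div_three_add_one_mul_log_lt (x := n) (by exact_mod_cast hn)
  have log_four_le : Real.log 4 ≤ Real.log (2 * n / k) :=
    Real.log_le_log (by norm_num) ((le_div_iff₀ hk').2 (by linarith))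
  have div_three_le : ((n / 3 : ℕ) : ℝ) ≤ 5 * k / 6 := by
    linarith [cast_div_le (m := n) (n := 3) (α := ℝ)]
  have log_four : Real.log 4 = 2 * Real.log 2 := by
    rw [show (4 : ℝ) = 2 ^ 2 by norm_num, Real.log_pow]
    norm_num
  nlinarith [Real.log_two_gt_d9]

theorem mul_one_sub_le_of_choose_mem_smoothNumbers {n k : ℕ} (hn : 37 ^ 2 ≤ n) (hk : 0 < k)
    (hkn : 2 * k ≤ n) (h : n.choose k ∈ smoothNumbers (k + 1)) :
    k * (1 - 2 * k / n : ℝ) ≤ (√n / 3 + 1) * Real.log n := by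
  have : (0 : ℝ) < n := by exact_mod_cast (by lia : 0 < n)
  have : (0 : ℝ) < k := by exact_mod_cast hk
  have bound := mul_log_le_of_choose_mem_smoothNumbers hn hk hkn h
  have log_eq : Real.log (2 * n / k) = Real.log 4 + Real.log (n / (2 * k)) := by
    rw [← Real.log_mul (by norm_num) (by positivity)]
    congr 1
    field_simp
    norm_num
  have one_sub_le : (1 - 2 * k / n : ℝ) ≤ Real.log (n / (2 * k)) := by
    simpa using Real.one_sub_inv_le_log_of_pos (show (0 : ℝ) < n / (2 * k) by positivity)
  calc k * (1 - 2 * k / n : ℝ) ≤ k * Real.log (n / (2 * k)) := by gcongr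
    _ ≤ (√n / 3 + 1) * Real.log n := by
      rw [log_eq] at bound
      linarith

-- Up to the error term `(√n / 3 + 1) log n`, smoothness forces `k (1 - 2k/n) ≤ 0`. For `n ≤ 10k`
-- the left side is a fixed fraction of `n` once `n/k` stays away from `2`; for `n > 10k` it is at
-- least `0.8 k`, and `n` is small against `k ^ (3/2)`.
theorem choose_notMem_smoothNumbers {n k : ℕ} (hn : 37 ^ 2 ≤ n) (hk : 37 ≤ k) (hkn : 2 * k ≤ n) :
    n.choose k ∉ smoothNumbers (k + 1) := by
  intro h
  have : (0 : ℝ) < k := by exact_mod_cast (by lia : 0 < k)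
  have hn' : (37 ^ 2 : ℝ) ≤ n := by exact_mod_cast hn
  have bound := mul_one_sub_le_of_choose_mem_smoothNumbers hn (by lia) hkn h
  rcases le_or_gt n (10 * k) with hle | hgt
  · have hgt : 5 * (k : ℝ) < 2 * n := by
      exact_mod_cast five_mul_lt_two_mul_of_choose_mem_smoothNumbers hn (by lia) hkn h
    have hle' : (n : ℝ) ≤ 10 * k := by exact_mod_cast hle
    have : 0.08 * n ≤ k * (1 - 2 * k / n : ℝ) := by
      have hn0 : (0 : ℝ) < n := by linarith
      have : k * (1 - 2 * k / n : ℝ) = k * (n - 2 * k) / n := by field_simp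
      rw [this, le_div_iff₀ hn0]
      nlinarith [mul_nonneg (sub_nonneg.2 hle') (show 0 ≤ 2 * (n : ℝ) - 5 * k by linarith)]
    linarith [sqrt_div_three_add_one_mul_log_lt hn']
  · have hgt' : 10 * (k : ℝ) < n := by exact_mod_cast hgt
    have error_lt := sqrt_div_three_add_one_mul_log_lt_of_sq_lt_cube (x := n) (y := k)
      (by linarith) (by exact_mod_cast four_mul_sq_lt_cube_of_choose_mem_smoothNumbers hk hkn h)
    have : (2 * k / n : ℝ) ≤ 0.2 := by
      rw [div_le_iff₀ (by linarith)]
      linarith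
    nlinarith

theorem exists_mem_le_lt_of_isChain {d n : ℕ} {l : List ℕ} {a : ℕ}
    (hl : (a :: l).IsChain (fun x y => y ≤ x + d)) (ha : a ≤ n)
    (hlast : n < (a :: l).getLast (List.cons_ne_nil a l) + d) :
    ∃ q ∈ a :: l, q ≤ n ∧ n < q + d := by
  induction l generalizing a with
  | nil => exact ⟨a, List.mem_singleton_self a, ha, hlast⟩
  | cons b l ih =>
    rw [List.isChain_cons_cons] at hl
    rcases lt_or_ge n b with hb | hb
    · exact ⟨a, List.mem_cons_self, ha, hb.trans_le hl.1⟩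
    · obtain ⟨q, hq, h⟩ := ih hl.2 hb hlast
      exact ⟨q, List.mem_cons_of_mem a hq, h⟩

theorem exists_prime_le_lt_add_thirty_seven {n : ℕ} (hn : 73 ≤ n) (hn' : n < 37 ^ 2) :
    ∃ q, q.Prime ∧ q ≤ n ∧ n < q + 37 := by
  obtain ⟨q, hq, hqn⟩ := exists_mem_le_lt_of_isChain (d := 37) (a := 73)
    (l := [109, 139, 173, 199, 233, 269, 293, 317, 353, 389, 421, 457, 491, 523, 557, 593, 619,
      653, 683, 719, 751, 787, 823, 859, 887, 919, 953, 983, 1019, 1051, 1087, 1123, 1153, 1187,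
      1223, 1259, 1291, 1327, 1361]) (by decide) hn (by simp; lia)
  refine ⟨q, ?_, hqn⟩
  revert q
  norm_num

theorem exists_prime_dvd_choose_of_lt_hundred {n k : ℕ} (hn : n < 100) (hk : 0 < k)
    (hk' : k < 37) (hkn : 2 * k ≤ n) : ∃ p, p.Prime ∧ k < p ∧ p ∣ n.choose k := by
  let primes := [2, 3, 5, 7, 11, 13, 17, 19, 23, 29, 31, 37, 41, 43, 47, 53, 59, 61, 67, 71, 73,
    79, 83, 89, 97]
  -- Kernel evaluation of `choose` through its Pascal recursion would be too slow.
  have search : ∀ n ∈ Finset.range 100, ∀ k ∈ Finset.Icc 1 (min 36 (n / 2)),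
      ∃ p ∈ primes, k < p ∧ p ∣ n.descFactorial k / k.factorial := by
    decide +kernel
  have prime_of_mem : ∀ p ∈ primes, p.Prime := by norm_num [primes]
  obtain ⟨p, hp, hkp, hpdvd⟩ := search n (Finset.mem_range.2 hn) k (Finset.mem_Icc.2 (by lia))
  exact ⟨p, prime_of_mem p hp, hkp, by rwa [choose_eq_descFactorial_div_factorial]⟩

theorem two_mul_mul_pow_lt_of_lt : ∀ k < 37, 0 < k → primeCounting k ≤ k ∧
    2 * k * k ^ k < 2 ^ k * 100 ^ (k - primeCounting k) := by decide +kernel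

theorem choose_notMem_smoothNumbers_of_lt {n k : ℕ} (hn : 100 ≤ n) (hk : 0 < k) (hk' : k < 37) :
    n.choose k ∉ smoothNumbers (k + 1) := by
  intro h
  obtain ⟨hπ, hlt⟩ := two_mul_mul_pow_lt_of_lt k hk' hk
  refine (two_mul_pow_le_of_choose_mem_smoothNumbers hk (by lia) h).not_gt ?_
  calc 2 * k * k ^ k * n ^ primeCounting k
      < 2 ^ k * 100 ^ (k - primeCounting k) * n ^ primeCounting k := by gcongr
    _ ≤ 2 ^ k * n ^ (k - primeCounting k) * n ^ primeCounting k := by gcongr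
    _ = (2 * n) ^ k := by rw [mul_assoc, ← pow_add, Nat.sub_add_cancel hπ, mul_pow]

theorem exists_prime_dvd_choose {n k : ℕ} (hk : 0 < k) (hkn : 2 * k ≤ n) :
    ∃ p, p.Prime ∧ k < p ∧ p ∣ n.choose k := by
  have of_notMem (h : n.choose k ∉ smoothNumbers (k + 1)) :
      ∃ p, p.Prime ∧ k < p ∧ p ∣ n.choose k := by
    rw [mem_smoothNumbers'] at h
    push Not at h
    obtain ⟨p, hp, hpdvd, hkp⟩ := h
    exact ⟨p, hp, hkp, hpdvd⟩
  rcases lt_or_ge k 37 with hk37 | hk37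
  · rcases lt_or_ge n 100 with hn | hn
    · exact exists_prime_dvd_choose_of_lt_hundred hn hk hk37 hkn
    · exact of_notMem (choose_notMem_smoothNumbers_of_lt hn hk hk37)
  · rcases lt_or_ge n (37 ^ 2) with hn | hn
    · obtain ⟨q, hq, hqn, hnq⟩ := exists_prime_le_lt_add_thirty_seven (by lia) hn
      exact ⟨q, hq, by lia, hq.dvd_choose (by lia) (by lia) hqn⟩
    · exact of_notMem (choose_notMem_smoothNumbers hn hk37 hkn)

end SylvesterSchur

/-! ### Weighted blow-ups -/

section RegularElement

variable {A : Type*} [CommRing A] {π : A}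

theorem pow_dvd_of_pow_dvd_mul (hπ : IsLeftRegular π) (hprime : (Ideal.span {π}).IsPrime) {a b : A}
    (ha : ¬π ∣ a) (m : ℕ) (h : π ^ m ∣ a * b) : π ^ m ∣ b := by
  induction m with
  | zero => simp
  | succ m ih =>
    obtain ⟨c, rfl⟩ := ih ((pow_dvd_pow π m.le_succ).trans h)
    have hac : π ∣ a * c := by
      obtain ⟨d, hd⟩ := h
      exact ⟨d, (hπ.pow m) (show π ^ m * (a * c) = π ^ m * (π * d) by linear_combination hd)⟩
    simp only [← Ideal.mem_span_singleton] at ha hac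
    rw [pow_succ]
    exact mul_dvd_mul_left _ (Ideal.mem_span_singleton.1 ((hprime.mem_or_mem hac).resolve_left ha))

theorem natDegree_eq_zero_of_pow_mul_dvd {κ : Type*} [CommRing κ] [IsDomain κ] {red : A →+* κ[X]}
    (hπ : IsLeftRegular π) (hker : RingHom.ker red = Ideal.span {π}) {g f : A} {j m : ℕ} {u : κ}
    (hu : u ≠ 0) (hg : red g ≠ 0) (hf : red f = C u) (h : π ^ j * g ∣ π ^ m * f) :
    (red g).natDegree = 0 := by
  have hprime : (Ideal.span {π}).IsPrime := hker ▸ RingHom.ker_isPrime red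
  have hπg : ¬π ∣ g := by rwa [← Ideal.mem_span_singleton, ← hker, RingHom.mem_ker]
  obtain ⟨x, hx⟩ := h
  obtain ⟨y, hy⟩ : π ^ m ∣ π ^ j * x :=
    pow_dvd_of_pow_dvd_mul hπ hprime hπg m ⟨f, by linear_combination -hx⟩
  have factorization : g * y = f :=
    (hπ.pow m) (show π ^ m * (g * y) = π ^ m * f by linear_combination -hx - g * hy)
  have hmul : red g * red y = C u := by rw [← map_mul, factorization, hf]
  have hle := natDegree_le_of_dvd ⟨red y, hmul.symm⟩ (C_ne_zero.2 hu)
  rwa [natDegree_C, Nat.le_zero] at hle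

end RegularElement

section RootExtension

variable {B K : Type*} [CommRing B] [CommRing K] {p : B} {k : ℕ}

/-- The extension of `B` by a formal `k`-th root of `p`; it turns the weight-`(k, 1)` blow-up of
`(p, φ)` into an ordinary one. -/
abbrev RootExtension (p : B) (k : ℕ) : Type _ := AdjoinRoot (X ^ k - C p : B[X])

/-- The adjoined `k`-th root of `p`, the exceptional parameter of the weighted blow-up. -/
noncomputable abbrev uniformizer (p : B) (k : ℕ) : RootExtension p k := AdjoinRoot.root _

theorem uniformizer_pow (p : B) (k : ℕ) : uniformizer p k ^ k = AdjoinRoot.of _ p := by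
  have := AdjoinRoot.eval₂_root (X ^ k - C p : B[X])
  rwa [eval₂_sub, eval₂_X_pow, eval₂_C, sub_eq_zero] at this

theorem isLeftRegular_uniformizer (hk : k ≠ 0) (hp : IsLeftRegular p) :
    IsLeftRegular (uniformizer p k) := by
  have : Module.Free B (RootExtension p k) := (monic_X_pow_sub_C p hk).free_adjoinRoot
  rw [← IsLeftRegular.pow_iff (Nat.pos_of_ne_zero hk), uniformizer_pow]
  exact IsSMulRegular.of_flat (S := RootExtension p k) hp

/-- The extension of a homomorphism killing `p` that sends the root to `0`. -/
noncomputable def rootReduction (hk : k ≠ 0) (f : B →+* K) (hf : f p = 0) :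
    RootExtension p k →+* K :=
  AdjoinRoot.lift f 0 (by simp [hk, hf])

variable {f : B →+* K} (hk : k ≠ 0) (hf : f p = 0)

@[simp]
theorem rootReduction_of (b : B) : rootReduction hk f hf (AdjoinRoot.of _ b) = f b :=
  AdjoinRoot.lift_of _

@[simp]
theorem rootReduction_uniformizer : rootReduction hk f hf (uniformizer p k) = 0 :=
  AdjoinRoot.lift_root _

theorem RootExtension.exists_eq_uniformizer_mul_add_of (s : RootExtension p k) :
    ∃ t b, s = uniformizer p k * t + AdjoinRoot.of _ b := by
  obtain ⟨q, rfl⟩ := AdjoinRoot.mk_surjective s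
  refine ⟨AdjoinRoot.mk _ q.divX, q.coeff 0, ?_⟩
  conv_lhs => rw [← divX_mul_X_add q]
  rw [map_add, map_mul, AdjoinRoot.mk_X, AdjoinRoot.mk_C, mul_comm]

theorem uniformizer_dvd_of_iff (hk : k ≠ 0) {b : B} :
    uniformizer p k ∣ AdjoinRoot.of _ b ↔ p ∣ b := by
  constructor
  · rintro ⟨c, hc⟩
    have hp : Ideal.Quotient.mk (Ideal.span {p}) p = 0 :=
      Ideal.Quotient.eq_zero_iff_mem.2 (Ideal.mem_span_singleton_self p)
    have := congr_arg (rootReduction hk _ hp) hc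
    simpa [Ideal.Quotient.eq_zero_iff_dvd] using this
  · rintro ⟨c, rfl⟩
    rw [map_mul, ← uniformizer_pow]
    exact dvd_mul_of_dvd_left (dvd_pow_self _ hk) _

theorem uniformizer_dvd_of_dvd_mul (hk : k ≠ 0) {φ : B} (hφ : ∀ b, p ∣ φ * b → p ∣ b)
    {c : RootExtension p k} (h : uniformizer p k ∣ AdjoinRoot.of _ φ * c) :
    uniformizer p k ∣ c := by
  obtain ⟨t, b, rfl⟩ := RootExtension.exists_eq_uniformizer_mul_add_of c
  rw [mul_add, dvd_add_right ⟨_, mul_left_comm _ _ t⟩, ← map_mul, uniformizer_dvd_of_iff hk] at h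
  exact (dvd_add_right (dvd_mul_right _ t)).2 ((uniformizer_dvd_of_iff hk).2 (hφ b h))

theorem ker_rootReduction {φ : B} (hker : RingHom.ker f = Ideal.span {p, φ}) :
    RingHom.ker (rootReduction hk f hf) = Ideal.span {uniformizer p k, AdjoinRoot.of _ φ} := by
  refine le_antisymm (fun s hs => ?_) ?_
  · obtain ⟨t, b, rfl⟩ := RootExtension.exists_eq_uniformizer_mul_add_of s
    have hb : b ∈ Ideal.span {p, φ} := by
      rw [← hker]
      simpa [RingHom.mem_ker] using hs
    obtain ⟨c, d, rfl⟩ := Ideal.mem_span_pair.1 hb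
    obtain ⟨q, hq⟩ := (uniformizer_dvd_of_iff hk).2 (dvd_refl p)
    refine Ideal.mem_span_pair.2 ⟨t + AdjoinRoot.of _ c * q, AdjoinRoot.of _ d, ?_⟩
    rw [map_add, map_mul, map_mul, hq]
    ring
  · have hφ : φ ∈ RingHom.ker f := hker ▸ Ideal.mem_span_pair.2 ⟨0, 1, by ring⟩
    rw [RingHom.mem_ker] at hφ
    simp [Ideal.span_le, Set.insert_subset_iff, hφ]

end RootExtension

section BlowupChart

variable {S κ : Type*} [CommRing S] [CommRing κ] {π φ : S}

/-- The affine chart `S[φ/π]` of the blow-up of `S` along `(π, φ)`. -/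
abbrev BlowupChart (π φ : S) : Type _ := AdjoinRoot (C π * X - C φ : S[X])

theorem BlowupChart.of_mul_root (π φ : S) :
    AdjoinRoot.of (C π * X - C φ) π * AdjoinRoot.root (C π * X - C φ) = AdjoinRoot.of _ φ := by
  have := AdjoinRoot.eval₂_root (C π * X - C φ : S[X])
  rwa [eval₂_sub, eval₂_mul, eval₂_X, eval₂_C, eval₂_C, sub_eq_zero] at this

theorem BlowupChart.isLeftRegular_of (hπ : IsLeftRegular π) (hφ : ∀ c, π ∣ φ * c → π ∣ c) :
    IsLeftRegular (AdjoinRoot.of (C π * X - C φ) π) := by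
  rw [isLeftRegular_iff_right_eq_zero_of_mul]
  intro x hx
  obtain ⟨q, rfl⟩ := AdjoinRoot.mk_surjective x
  rw [← AdjoinRoot.mk_C, ← map_mul, AdjoinRoot.mk_eq_zero] at hx
  obtain ⟨r, hr⟩ := hx
  have dvd_r : C π ∣ r := by
    rw [C_dvd_iff_dvd_coeff]
    intro i
    apply hφ
    rw [← coeff_C_mul]
    exact (C_dvd_iff_dvd_coeff _ _).1 ⟨X * r - q, by linear_combination hr⟩ i
  obtain ⟨r, rfl⟩ := dvd_r
  have hC : IsLeftRegular (C π) := fun a b h => Polynomial.ext fun i =>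
    hπ (by simpa using congr_arg (coeff · i) h)
  rw [AdjoinRoot.mk_eq_zero]
  exact ⟨r, hC (show C π * q = C π * _ by linear_combination hr)⟩

/-- The reduction of the chart `S[φ/π]` modulo `π`, sending `φ/π` to the variable. -/
noncomputable def chartReduction (f : S →+* κ) (hf : Ideal.span {π, φ} ≤ RingHom.ker f) :
    BlowupChart π φ →+* κ[X] :=
  AdjoinRoot.lift (C.comp f) X <| by
    have hπ : f π = 0 := hf (Ideal.subset_span (by simp))
    have hφ : f φ = 0 := hf (Ideal.subset_span (by simp))
    simp [hπ, hφ]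

theorem chartReduction_mk {f : S →+* κ} (hf : Ideal.span {π, φ} ≤ RingHom.ker f) (q : S[X]) :
    chartReduction f hf (AdjoinRoot.mk _ q) = q.map f :=
  AdjoinRoot.lift_mk _ q

theorem ker_chartReduction {f : S →+* κ} (hker : RingHom.ker f = Ideal.span {π, φ}) :
    RingHom.ker (chartReduction f hker.ge) = Ideal.span {AdjoinRoot.of _ π} := by
  refine le_antisymm (fun x hx => ?_) ?_
  · obtain ⟨q, rfl⟩ := AdjoinRoot.mk_surjective x
    have hq : q ∈ (Ideal.span {π, φ}).map C := by
      rw [← hker, ← ker_mapRingHom]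
      rwa [RingHom.mem_ker, chartReduction_mk] at hx
    suffices ((Ideal.span {π, φ}).map C).map (AdjoinRoot.mk _) ≤ Ideal.span {AdjoinRoot.of _ π} from
      this (Ideal.mem_map_of_mem _ hq)
    rw [Ideal.map_map, Ideal.map_span, Ideal.span_le]
    rintro _ ⟨s, rfl | rfl, rfl⟩
    · exact Ideal.mem_span_singleton_self _
    · exact Ideal.mem_span_singleton.2 ⟨_, (BlowupChart.of_mul_root _ _).symm⟩
  · have hπ : f π = 0 := hker.ge (Ideal.subset_span (by simp))
    rw [Ideal.span_singleton_le_iff_mem, RingHom.mem_ker, ← AdjoinRoot.mk_C, chartReduction_mk,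
      map_C, hπ, C_0]

end BlowupChart

section WeightIdeal

variable {B : Type*} [CommRing B] {p φ : B} {k : ℕ}

/-- The ideal generated by the monomials in `p` and `φ` of weight at least `m`, where `p` has
weight `k` and `φ` has weight `1`. -/
def weightIdeal (p φ : B) (k m : ℕ) : Ideal B :=
  Ideal.span {x | ∃ a b, m ≤ k * a + b ∧ x = p ^ a * φ ^ b}

theorem mul_pow_mul_pow_mem_weightIdeal {m a b : ℕ} (h : m ≤ k * a + b) (c : B) :
    c * (p ^ a * φ ^ b) ∈ weightIdeal p φ k m :=
  Ideal.mul_mem_left _ c (Ideal.subset_span ⟨a, b, h, rfl⟩)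

variable {A : Type*} [CommRing A]

theorem pow_dvd_map_of_mem_weightIdeal {ι : B →+* A} {π y : A} (hp : ι p = π ^ k)
    (hφ : ι φ = π * y) {m : ℕ} {z : B} (hz : z ∈ weightIdeal p φ k m) : π ^ m ∣ ι z := by
  suffices weightIdeal p φ k m ≤ (Ideal.span {π ^ m}).comap ι from
    Ideal.mem_span_singleton.1 (this hz)
  refine Ideal.span_le.2 ?_
  rintro _ ⟨a, b, hab, rfl⟩
  refine Ideal.mem_span_singleton.2 ?_
  have : ι (p ^ a * φ ^ b) = π ^ (k * a + b) * y ^ b := by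
    rw [map_mul, map_pow, map_pow, hp, hφ]
    ring
  rw [this]
  exact dvd_mul_of_dvd_left (pow_dvd_pow π hab) _

end WeightIdeal

section WeightedBlowup

theorem natDegree_C_mul_X_pow_add_C {κ : Type*} [CommRing κ] {r : κ} (hr : r ≠ 0) (s : κ) {j : ℕ}
    (hj : j ≠ 0) : (C r * X ^ j + C s).natDegree = j := by
  compute_degree!
  simpa [hj] using hr

variable {A B κ : Type*} [CommRing A] [CommRing B] [CommRing κ] {p φ : B} {k : ℕ} {f : B →+* κ}

/-- `A` is a chart of the blow-up of `B` along `(p, φ)` with weights `(k, 1)`: in `A`, the element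
`p` becomes `π ^ k` and `φ` becomes `π * y`, while `red` identifies the exceptional divisor `π = 0`
with the affine line over `κ`, with coordinate `y`. -/
structure IsWeightedBlowup (p φ : B) (k : ℕ) (f : B →+* κ) (ι : B →+* A) (π y : A)
    (red : A →+* κ[X]) : Prop where
  isLeftRegular : IsLeftRegular π
  ker_red : RingHom.ker red = Ideal.span {π}
  map_p : ι p = π ^ k
  map_φ : ι φ = π * y
  red_map (b : B) : red (ι b) = C (f b)
  red_y : red y = X

theorem isWeightedBlowup_blowupChart {S : Type*} [CommRing S] {ι : B →+* S} {π : S} {red : S →+* κ}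
    (hπ : IsLeftRegular π) (hφ : ∀ c, π ∣ ι φ * c → π ∣ c)
    (hker : RingHom.ker red = Ideal.span {π, ι φ}) (hp : ι p = π ^ k)
    (hred : ∀ b, red (ι b) = f b) :
    IsWeightedBlowup p φ k f ((AdjoinRoot.of (C π * X - C (ι φ))).comp ι) (AdjoinRoot.of _ π)
      (AdjoinRoot.root _) (chartReduction red hker.ge) where
  isLeftRegular := BlowupChart.isLeftRegular_of hπ hφ
  ker_red := ker_chartReduction hker
  map_p := by rw [RingHom.comp_apply, hp, map_pow]
  map_φ := (BlowupChart.of_mul_root π (ι φ)).symm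
  red_map b := by
    rw [RingHom.comp_apply, ← AdjoinRoot.mk_C, chartReduction_mk, map_C, hred]
  red_y := by rw [← AdjoinRoot.mk_X, chartReduction_mk, map_X]

theorem IsWeightedBlowup.map_eq_zero_of_dvd [IsDomain κ] {ι : B →+* A} {π y : A} {red : A →+* κ[X]}
    (hA : IsWeightedBlowup p φ k f ι π y red) {j v : ℕ} (hj : j ≠ 0) (hjk : j ≤ k) {r s u z : B}
    (hu : f u ≠ 0) (hz : z ∈ weightIdeal p φ k (k * v + 1))
    (h : r * φ ^ j + s * p ∣ p ^ v * u + z) : f r = 0 := by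
  by_contra hr
  have red_π : red π = 0 := by
    rw [← RingHom.mem_ker, hA.ker_red]
    exact Ideal.mem_span_singleton_self π
  have map_g : ι (r * φ ^ j + s * p) = π ^ j * (ι r * y ^ j + ι s * π ^ (k - j)) := by
    rw [map_add, map_mul, map_mul, map_pow, hA.map_p, hA.map_φ, ← pow_mul_pow_sub π hjk]
    ring
  obtain ⟨z', hz'⟩ := pow_dvd_map_of_mem_weightIdeal hA.map_p hA.map_φ hz
  have map_F : ι (p ^ v * u + z) = π ^ (k * v) * (ι u + π * z') := by
    rw [map_add, map_mul, map_pow, hA.map_p, hz']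
    ring
  have natDegree_red_g : (red (ι r * y ^ j + ι s * π ^ (k - j))).natDegree = j := by
    have : red (ι r * y ^ j + ι s * π ^ (k - j)) = C (f r) * X ^ j + C (f s * 0 ^ (k - j)) := by
      simp [hA.red_map, hA.red_y, red_π]
    rw [this, natDegree_C_mul_X_pow_add_C hr _ hj]
  have red_F : red (ι u + π * z') = C (f u) := by simp [hA.red_map, red_π]
  refine hj (natDegree_red_g.symm.trans
    (natDegree_eq_zero_of_pow_mul_dvd (j := j) (m := k * v) hA.isLeftRegular hA.ker_red hu ?_
      red_F ?_))
  · exact ne_zero_of_natDegree_gt (natDegree_red_g ▸ Nat.pos_of_ne_zero hj)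
  · rw [← map_g, ← map_F]
    exact map_dvd ι h

theorem coeff_mem_span_pair_of_dvd (hprime : (Ideal.span {p, φ}).IsPrime) (hp : IsLeftRegular p)
    (hφ : ∀ b, p ∣ φ * b → p ∣ b) {j v : ℕ} (hj : j ≠ 0) (hjk : j ≤ k) {r s u z : B}
    (hu : u ∉ Ideal.span {p, φ}) (hz : z ∈ weightIdeal p φ k (k * v + 1))
    (h : r * φ ^ j + s * p ∣ p ^ v * u + z) : r ∈ Ideal.span {p, φ} := by
  have mk_p : Ideal.Quotient.mk (Ideal.span {p, φ}) p = 0 :=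
    Ideal.Quotient.eq_zero_iff_mem.2 (Ideal.subset_span (by simp))
  have hk : k ≠ 0 := by lia
  have hA := isWeightedBlowup_blowupChart (isLeftRegular_uniformizer hk hp)
    (fun _ => uniformizer_dvd_of_dvd_mul hk hφ) (ker_rootReduction hk mk_p Ideal.mk_ker)
    (uniformizer_pow p k).symm (rootReduction_of hk mk_p)
  rw [← Ideal.Quotient.eq_zero_iff_mem] at hu ⊢
  exact hA.map_eq_zero_of_dvd hj hjk hu hz h

theorem mem_span_pair_pow_of_dvd (hprime : (Ideal.span {p, φ}).IsPrime) (hp : IsLeftRegular p)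
    (hφ : ∀ b, p ∣ φ * b → p ∣ b) {v : ℕ} {g u z : B} (hu : u ∉ Ideal.span {p, φ})
    (hz : z ∈ weightIdeal p φ k (k * v + 1)) (hgF : g ∣ p ^ v * u + z)
    (hg : g ∈ Ideal.span {p, φ}) : g ∈ Ideal.span {p, φ ^ (k + 1)} := by
  suffices ∀ j ≤ k, g ∈ Ideal.span {p, φ ^ (j + 1)} from this k le_rfl
  intro j
  induction j with
  | zero => simpa using hg
  | succ j ih =>
    intro hjk
    obtain ⟨s, r, rfl⟩ := Ideal.mem_span_pair.1 (ih (by lia))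
    rw [add_comm] at hgF
    obtain ⟨s', r', rfl⟩ := Ideal.mem_span_pair.1
      (coeff_mem_span_pair_of_dvd hprime hp hφ j.succ_ne_zero hjk hu hz hgF)
    exact Ideal.mem_span_pair.2 ⟨s + s' * φ ^ (j + 1), r', by ring⟩

end WeightedBlowup

/-! ### Factors of Schur-type polynomials -/

section Reduction

variable {B K : Type*} [CommRing B] [CommRing K] {q : B →+* K} {p : B}

theorem mem_span_pair_iff_map_dvd (hq : Function.Surjective q)
    (hker : RingHom.ker q = Ideal.span {p}) {ψ g : B} :
    g ∈ Ideal.span {p, ψ} ↔ q ψ ∣ q g := by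
  have hp : q p = 0 := hker.ge (Ideal.mem_span_singleton_self p)
  constructor
  · intro h
    obtain ⟨a, b, rfl⟩ := Ideal.mem_span_pair.1 h
    simp [hp]
  · rintro ⟨c, hc⟩
    obtain ⟨c, rfl⟩ := hq c
    have hmem : g - ψ * c ∈ RingHom.ker q := by rw [RingHom.mem_ker, map_sub, map_mul, hc, sub_self]
    rw [hker] at hmem
    obtain ⟨d, hd⟩ := Ideal.mem_span_singleton.1 hmem
    exact Ideal.mem_span_pair.2 ⟨d, c, by linear_combination -hd⟩

theorem map_pow_succ_dvd_of_map_dvd [IsDomain K] (hq : Function.Surjective q)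
    (hker : RingHom.ker q = Ideal.span {p}) (hp : IsLeftRegular p) {φ g u z : B} {k v : ℕ}
    (hφ : Prime (q φ)) (hu : ¬q φ ∣ q u) (hz : z ∈ weightIdeal p φ k (k * v + 1))
    (hgF : g ∣ p ^ v * u + z) (hg : q φ ∣ q g) : q φ ^ (k + 1) ∣ q g := by
  have hprime : (Ideal.span {p, φ}).IsPrime := by
    have : (Ideal.span {q φ}).IsPrime := (Ideal.span_singleton_prime hφ.ne_zero).2 hφ
    convert this.comap q
    ext x
    rw [mem_span_pair_iff_map_dvd hq hker, Ideal.mem_comap, Ideal.mem_span_singleton]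
  have dvd_iff (b : B) : p ∣ b ↔ q b = 0 := by
    rw [← Ideal.mem_span_singleton, ← hker, RingHom.mem_ker]
  have hφ' (b : B) (h : p ∣ φ * b) : p ∣ b := by
    rw [dvd_iff, map_mul] at h
    exact (dvd_iff b).2 ((mul_eq_zero.1 h).resolve_left hφ.ne_zero)
  rw [← mem_span_pair_iff_map_dvd hq hker] at hu hg
  rw [← map_pow, ← mem_span_pair_iff_map_dvd hq hker]
  exact mem_span_pair_pow_of_dvd hprime hp hφ' hu hz hgF hg

theorem ker_mapRingHom_intCast (p : ℕ) :
    RingHom.ker (mapRingHom (Int.castRingHom (ZMod p))) = Ideal.span {C (p : ℤ)} := by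
  rw [ker_mapRingHom, ZMod.ker_intCastRingHom, Ideal.map_span, Set.image_singleton]

end Reduction

section Degree

theorem degree_sum_mul_pow_lt {R : Type*} [CommRing R] [Nontrivial R] {φ : R[X]} (hφ : φ.Monic)
    {c : ℕ → R[X]} {n : ℕ} (hc : ∀ i < n, (c i).degree < φ.degree) :
    (∑ i ∈ Finset.range n, c i * φ ^ i).degree < (φ ^ n).degree := by
  induction n with
  | zero => simp
  | succ n ih =>
    rw [Finset.sum_range_succ]
    have last_lt : (c n * φ ^ n).degree < (φ ^ (n + 1)).degree := by
      rw [pow_succ', (hφ.pow n).degree_mul, (hφ.pow n).degree_mul]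
      exact WithBot.add_lt_add_right (degree_ne_bot.2 (hφ.pow n).ne_zero) (hc n n.lt_succ_self)
    have pow_le : (φ ^ n).degree ≤ (φ ^ (n + 1)).degree := by
      rw [pow_succ', (hφ.pow n).degree_mul]
      exact le_add_of_nonneg_left (zero_le_degree_iff.2 hφ.ne_zero)
    exact (degree_add_le _ _).trans_lt
      (max_lt ((ih fun i hi => hc i (by lia)).trans_le pow_le) last_lt)

theorem dvd_of_natDegree_lt_add {K : Type*} [Field K] {φ F g : K[X]} (hφ : Irreducible φ)
    {m : ℕ} (hφF : φ ^ m ∣ F) (hgF : g ∣ F) (hF : F ≠ 0)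
    (hdeg : F.natDegree < g.natDegree + m * φ.natDegree) : φ ∣ g := by
  by_contra hφg
  obtain ⟨h, rfl⟩ := hgF
  have hφh : φ ^ m ∣ h := hφ.prime.pow_dvd_of_dvd_mul_left m hφg hφF
  have hle := natDegree_le_of_dvd hφh (right_ne_zero_of_mul hF)
  rw [natDegree_pow] at hle
  rw [natDegree_mul (left_ne_zero_of_mul hF) (right_ne_zero_of_mul hF)] at hdeg
  lia

end Degree

section Factorial

theorem dvd_factorial_div_factorial {p n k i : ℕ} (h : p ∣ n.choose k) (hi : i + k ≤ n) :
    p ∣ n.factorial / i.factorial := by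
  rw [← Nat.choose_mul_factorial_mul_factorial (show k ≤ n by lia), mul_assoc,
    Nat.mul_div_assoc _ (dvd_mul_of_dvd_right (Nat.factorial_dvd_factorial (by lia)) _)]
  exact dvd_mul_of_dvd_left h _

theorem mul_padicValNat_factorial_lt {p k i : ℕ} [Fact p.Prime] (hk : k < p) (hi : i ≠ 0) :
    k * padicValNat p i.factorial < i :=
  (Nat.mul_le_mul_right _ (Nat.le_sub_one_of_lt hk)).trans_lt
    (sub_one_mul_padicValNat_factorial_lt_of_ne_zero p hi)

theorem pow_sub_dvd_factorial_div_factorial (p : ℕ) [Fact p.Prime] {n i : ℕ} (h : i ≤ n) :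
    p ^ (padicValNat p n.factorial - padicValNat p i.factorial) ∣ n.factorial / i.factorial := by
  rw [← padicValNat.div_of_dvd (Nat.factorial_dvd_factorial h)]
  exact pow_padicValNat_dvd

end Factorial

section SchurSum

variable {n k p : ℕ} {φ b g : ℤ[X]} {a : ℕ → ℤ[X]}

/-- The polynomial `∑_{i<n} (n!/i!) a_i φ^i + b φ^n`, whose leading coefficient `b` in the
`φ`-expansion is allowed to be a polynomial. The division is exact. -/
noncomputable def schurSum (n : ℕ) (φ : ℤ[X]) (a : ℕ → ℤ[X]) (b : ℤ[X]) : ℤ[X] :=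
  ∑ i ∈ Finset.range n, C ((n.factorial / i.factorial : ℕ) : ℤ) * a i * φ ^ i + b * φ ^ n

theorem degree_schurSum_tail_lt (hφ : φ.Monic) (ha : ∀ i < n, (a i).degree < φ.degree)
    (hb : b ≠ 0) :
    (∑ i ∈ Finset.range n, C ((n.factorial / i.factorial : ℕ) : ℤ) * a i * φ ^ i).degree <
      (b * φ ^ n).degree := by
  refine (degree_sum_mul_pow_lt hφ fun i hi => ?_).trans_le ?_
  · exact (degree_mul_le _ _).trans_lt ((add_le_of_nonpos_left degree_C_le).trans_lt (ha i hi))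
  · rw [degree_mul]
    exact le_add_of_nonneg_left (zero_le_degree_iff.2 hb)

theorem leadingCoeff_schurSum (hφ : φ.Monic) (ha : ∀ i < n, (a i).degree < φ.degree)
    (hb : b ≠ 0) : (schurSum n φ a b).leadingCoeff = b.leadingCoeff := by
  rw [schurSum, leadingCoeff_add_of_degree_lt (degree_schurSum_tail_lt hφ ha hb),
    leadingCoeff_mul, hφ.pow n |>.leadingCoeff, mul_one]

theorem natDegree_schurSum (hφ : φ.Monic) (ha : ∀ i < n, (a i).degree < φ.degree)
    (hb : b ≠ 0) : (schurSum n φ a b).natDegree = b.natDegree + n * φ.natDegree := by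
  rw [schurSum, natDegree_add_eq_right_of_degree_lt (degree_schurSum_tail_lt hφ ha hb),
    natDegree_mul hb (hφ.pow n).ne_zero, natDegree_pow]

theorem map_pow_dvd_map_schurSum (hp : p ∣ n.choose k) (hk : k ≠ 0) (hkn : k ≤ n) :
    φ.map (Int.castRingHom (ZMod p)) ^ (n - k + 1) ∣
      (schurSum n φ a b).map (Int.castRingHom (ZMod p)) := by
  simp only [schurSum, Polynomial.map_add, Polynomial.map_sum, Polynomial.map_mul,
    Polynomial.map_pow, map_C]
  refine dvd_add (Finset.dvd_sum fun i _ => ?_) (dvd_mul_of_dvd_right (pow_dvd_pow _ (by lia)) _)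
  rcases le_or_gt (i + k) n with hi | hi
  · have coeff_eq_zero : Int.castRingHom (ZMod p) (n.factorial / i.factorial : ℕ) = 0 := by
      rw [map_natCast, ZMod.natCast_eq_zero_iff]
      exact dvd_factorial_div_factorial hp hi
    rw [coeff_eq_zero, C_0, zero_mul, zero_mul]
    exact dvd_zero _
  · exact dvd_mul_of_dvd_right (pow_dvd_pow _ (by lia)) _

theorem schurSum_sub_mem_weightIdeal [Fact p.Prime] (hk : k < p) (hn : n ≠ 0) :
    schurSum n φ a b - C (n.factorial : ℤ) * a 0 ∈
      weightIdeal (C (p : ℤ)) φ k (k * padicValNat p n.factorial + 1) := by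
  have term_mem (i : ℕ) (hi : i < n) (hi0 : i ≠ 0) :
      C ((n.factorial / i.factorial : ℕ) : ℤ) * a i * φ ^ i ∈
        weightIdeal (C (p : ℤ)) φ k (k * padicValNat p n.factorial + 1) := by
    obtain ⟨c, hc⟩ := pow_sub_dvd_factorial_div_factorial p hi.le
    have weight_le : k * padicValNat p n.factorial + 1 ≤
        k * (padicValNat p n.factorial - padicValNat p i.factorial) + i := by
      have := mul_padicValNat_factorial_lt hk hi0
      rw [Nat.mul_sub]
      lia
    convert mul_pow_mul_pow_mem_weightIdeal weight_le (C (c : ℤ) * a i) using 1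
    rw [hc]
    push_cast
    rw [C_mul, C_pow]
    ring
  have last_mem : b * φ ^ n ∈ weightIdeal (C (p : ℤ)) φ k (k * padicValNat p n.factorial + 1) := by
    have weight_le : k * padicValNat p n.factorial + 1 ≤ k * 0 + n := by
      simpa using mul_padicValNat_factorial_lt hk hn
    simpa using mul_pow_mul_pow_mem_weightIdeal (p := C (p : ℤ)) (φ := φ) weight_le b
  obtain ⟨n, rfl⟩ := Nat.exists_eq_succ_of_ne_zero hn
  have split : schurSum (n + 1) φ a b - C ((n + 1).factorial : ℤ) * a 0 =
      ∑ i ∈ Finset.range n, C (((n + 1).factorial / (i + 1).factorial : ℕ) : ℤ) * a (i + 1) *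
        φ ^ (i + 1) + b * φ ^ (n + 1) := by
    rw [schurSum, Finset.sum_range_succ', Nat.factorial_zero, Nat.div_one]
    ring
  rw [split]
  refine add_mem (Ideal.sum_mem _ fun i hi => term_mem _ ?_ i.succ_ne_zero) last_mem
  exact Nat.succ_lt_succ (Finset.mem_range.1 hi)

theorem not_map_dvd_map_of_degree_lt [Fact p.Prime] (hφ : φ.Monic) {c : ℤ[X]}
    (hc : c.degree < φ.degree) (hpc : ¬(p : ℤ) ∣ c.content) :
    ¬φ.map (Int.castRingHom (ZMod p)) ∣ c.map (Int.castRingHom (ZMod p)) := by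
  intro h
  have degree_map_lt :
      (c.map (Int.castRingHom (ZMod p))).degree < (φ.map (Int.castRingHom (ZMod p))).degree := by
    rw [hφ.degree_map]
    exact degree_map_le.trans_lt hc
  have hker : c ∈ RingHom.ker (mapRingHom (Int.castRingHom (ZMod p))) :=
    eq_zero_of_dvd_of_degree_lt h degree_map_lt
  rw [ker_mapRingHom_intCast, Ideal.mem_span_singleton] at hker
  exact hpc (dvd_content_iff_C_dvd.2 hker)

theorem exists_factorial_eq_pow_mul (p n : ℕ) [Fact p.Prime] :
    ∃ m, ¬p ∣ m ∧ n.factorial = p ^ padicValNat p n.factorial * m := by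
  obtain ⟨m, hm⟩ := pow_padicValNat_dvd (p := p) (n := n.factorial)
  refine ⟨m, fun hpm => ?_, hm⟩
  refine pow_succ_padicValNat_not_dvd (p := p) n.factorial_ne_zero ?_
  conv_rhs => rw [hm]
  exact mul_dvd_mul_left _ hpm

theorem map_pow_succ_dvd_of_dvd_schurSum [hp : Fact p.Prime] (hφ : φ.Monic)
    (hirr : Irreducible (φ.map (Int.castRingHom (ZMod p)))) (hk : k < p) (hn : n ≠ 0)
    (ha : (a 0).degree < φ.degree) (hpa : ¬(p : ℤ) ∣ (a 0).content) (hg : g ∣ schurSum n φ a b)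
    (hφg : φ.map (Int.castRingHom (ZMod p)) ∣ g.map (Int.castRingHom (ZMod p))) :
    φ.map (Int.castRingHom (ZMod p)) ^ (k + 1) ∣ g.map (Int.castRingHom (ZMod p)) := by
  obtain ⟨m, hpm, hm⟩ := exists_factorial_eq_pow_mul p n
  have hu : ¬φ.map (Int.castRingHom (ZMod p)) ∣
      (C (m : ℤ) * a 0).map (Int.castRingHom (ZMod p)) := by
    refine not_map_dvd_map_of_degree_lt hφ ?_ ?_
    · exact (degree_mul_le _ _).trans_lt ((add_le_of_nonpos_left degree_C_le).trans_lt ha)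
    · rw [content_C_mul, (Nat.prime_iff_prime_int.1 hp.out).dvd_mul]
      simpa [Int.natCast_dvd_natCast] using ⟨hpm, hpa⟩
  have hreg : IsLeftRegular (C (p : ℤ)) :=
    (IsRegular.of_ne_zero (C_ne_zero.2 (by exact_mod_cast hp.out.ne_zero))).left
  refine map_pow_succ_dvd_of_map_dvd (q := mapRingHom (Int.castRingHom (ZMod p)))
    (map_surjective _ (ZMod.ringHom_surjective _)) (ker_mapRingHom_intCast p) hreg hirr.prime hu
    (schurSum_sub_mem_weightIdeal (a := a) (b := b) hk hn) ?_ hφg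
  have hC : C (n.factorial : ℤ) = C (p : ℤ) ^ padicValNat p n.factorial * C (m : ℤ) := by
    rw [← C_pow, ← C_mul]
    exact_mod_cast congr_arg (fun x : ℕ => C (x : ℤ)) hm
  convert hg using 1
  linear_combination -a 0 * hC

theorem succ_mul_natDegree_le_of_dvd_schurSum [Fact p.Prime] (hkp : k < p) (hpdvd : p ∣ n.choose k)
    (hk : k ≠ 0) (hkn : k ≤ n) (hφ : φ.Monic)
    (hirr : Irreducible (φ.map (Int.castRingHom (ZMod p))))
    (ha : ∀ i < n, (a i).degree < φ.degree) (hb : b.degree < φ.degree)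
    (hpa : ¬(p : ℤ) ∣ (a 0).content) (hpb : ¬(p : ℤ) ∣ b.leadingCoeff) (hg : g ∣ schurSum n φ a b)
    (hkg : k * φ.natDegree ≤ g.natDegree) : (k + 1) * φ.natDegree ≤ g.natDegree := by
  have hb0 : b ≠ 0 := by
    rintro rfl
    simp at hpb
  have natDegree_map_eq {f : ℤ[X]} (hf : f ∣ schurSum n φ a b) :
      f.map (Int.castRingHom (ZMod p)) ≠ 0 ∧
        (f.map (Int.castRingHom (ZMod p))).natDegree = f.natDegree := by
    have hlead : Int.castRingHom (ZMod p) f.leadingCoeff ≠ 0 := by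
      rw [eq_intCast, Ne, ZMod.intCast_zmod_eq_zero_iff_dvd]
      refine fun h => hpb (h.trans ?_)
      rw [← leadingCoeff_schurSum hφ ha hb0]
      exact leadingCoeff_dvd_leadingCoeff hf
    refine ⟨fun h => hlead ?_, natDegree_map_of_leadingCoeff_ne_zero _ hlead⟩
    rw [← coeff_natDegree, ← coeff_map, h, coeff_zero]
  obtain ⟨hF0, hFdeg⟩ := natDegree_map_eq dvd_rfl
  obtain ⟨hg0, hgdeg⟩ := natDegree_map_eq hg
  have hφdeg := hφ.natDegree_map (Int.castRingHom (ZMod p))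
  have hφg : φ.map (Int.castRingHom (ZMod p)) ∣ g.map (Int.castRingHom (ZMod p)) := by
    refine dvd_of_natDegree_lt_add hirr (map_pow_dvd_map_schurSum hpdvd hk hkn)
      (map_dvd (mapRingHom _) hg) hF0 ?_
    rw [hFdeg, hgdeg, hφdeg, natDegree_schurSum hφ ha hb0]
    have := natDegree_lt_natDegree hb0 hb
    have : n * φ.natDegree = k * φ.natDegree + (n - k) * φ.natDegree := by
      rw [← add_mul, Nat.add_sub_cancel' hkn]
    linarith
  have hpow := natDegree_le_of_dvd (map_pow_succ_dvd_of_dvd_schurSum hφ hirr hkp (by lia)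
    (ha 0 (by lia)) hpa hg hφg) hg0
  rwa [natDegree_pow, hφdeg, hgdeg] at hpow

end SchurSum

theorem degree_C_lt_of_irreducible_map {R K : Type*} [CommRing R] [Field K] {φ : R[X]}
    {f : R →+* K} (hφ : φ.Monic) (hirr : Irreducible (φ.map f)) (c : R) :
    (C c).degree < φ.degree := by
  rw [← hφ.degree_map f]
  exact degree_C_le.trans_lt (degree_pos_of_irreducible hirr)

theorem not_dvd_of_isCoprime_factorial {n p : ℕ} (hp : p.Prime) (hpn : p ≤ n) {c : ℤ}
    (hc : IsCoprime c n.factorial) : ¬(p : ℤ) ∣ c := fun h =>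
  (Nat.prime_iff_prime_int.1 hp).not_isUnit
    (hc.isUnit_of_dvd' h (Int.natCast_dvd_natCast.2 (hp.dvd_factorial.2 hpn)))

theorem no_medium_degree_factor_general {n k : ℕ} {φ b g : ℤ[X]} {a : ℕ → ℤ[X]} (hφ : φ.Monic)
    (hirr : ∀ p : ℕ, p.Prime → p ≤ n → Irreducible (φ.map (Int.castRingHom (ZMod p))))
    (ha : ∀ i < n, (a i).degree < φ.degree) (hb : b.degree < φ.degree)
    (ha0 : IsCoprime (a 0).content (n.factorial : ℤ))
    (hlead : IsCoprime b.leadingCoeff (n.factorial : ℤ)) (hk : 1 ≤ k) (hkn : 2 * k ≤ n)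
    (hg : g ∣ schurSum n φ a b) :
    ¬(k * φ.natDegree ≤ g.natDegree ∧ g.natDegree < (k + 1) * φ.natDegree) := by
  rintro ⟨hle, hlt⟩
  obtain ⟨p, hp, hkp, hpdvd⟩ := exists_prime_dvd_choose hk hkn
  have : Fact p.Prime := ⟨hp⟩
  have hpn : p ≤ n := hp.dvd_factorial.1
    (hpdvd.trans ⟨k.factorial * (n - k).factorial, by
      rw [← mul_assoc, Nat.choose_mul_factorial_mul_factorial (by lia)]⟩)
  exact hlt.not_ge (succ_mul_natDegree_le_of_dvd_schurSum hkp hpdvd (by lia) (by lia) hφ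
    (hirr p hp hpn) ha hb (not_dvd_of_isCoprime_factorial hp hpn ha0)
    (not_dvd_of_isCoprime_factorial hp hpn hlead) hg hle)

/-- Step II of the proof of the main theorem: with `n ≥ 2`, `φ` monic and irreducible
modulo all primes `p ≤ n`, each `a i` of degree `< deg φ`, and `an` as well as the
content of `a 0` coprime with `n!`, the polynomial
`F = ∑_{i<n} (n!/i!)·(a i)·φ^i + an·φ^n` has no factor in `ℤ[x]` of degree in the
interval `[k·deg φ, (k+1)·deg φ)` for any integer `1 ≤ k ≤ n/2`. -/
theorem no_medium_degree_factor (n : ℕ) (hn : 2 ≤ n) (φ : ℤ[X]) (hφmonic : φ.Monic)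
    (hφirr : ∀ p : ℕ, p.Prime → p ≤ n → Irreducible (φ.map (Int.castRingHom (ZMod p))))
    (a : ℕ → ℤ[X]) (an : ℤ)
    (hdeg : ∀ i < n, (a i).degree < φ.degree)
    (han : IsCoprime an (n.factorial : ℤ))
    (ha0 : IsCoprime ((a 0).content) (n.factorial : ℤ)) :
    ∀ k : ℕ, 1 ≤ k → 2 * k ≤ n →
      ∀ g : ℤ[X], g ∣ (∑ i ∈ Finset.range n,
            C ((n.factorial / i.factorial : ℕ) : ℤ) * a i * φ ^ i
          + C an * φ ^ n) →
        ¬ (k * φ.natDegree ≤ g.natDegree ∧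
           g.natDegree < (k + 1) * φ.natDegree) := by
  intro k hk hkn g hg
  exact no_medium_degree_factor_general hφmonic hφirr hdeg
    (degree_C_lt_of_irreducible_map hφmonic (hφirr 2 Nat.prime_two hn) an) ha0
    (by rwa [leadingCoeff_C]) hk hkn hg
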